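/- For the polynomial f(x,y) = x³ + 3xy² + x²y² on ℝ², the stable set of the origin for the gradient flow ẋ = ∇f(x) has nonempty interior; that is, the set of points p ∈ ℝ² such that the solution of ẋ = ∇f(x) with x(0) = p is defined on [0,∞) and converges to 0 as t → ∞ has nonempty interior. In particular there are infinitely many nontrivial trajectories of this flow converging to the origin. -/

import Mathlib

open Metric Set Filter

/-- A nontrivial trajectory of the gradient flow `ẋ = ∇f(x)` converging to the origin:
a nonconstant C¹ curve `γ : [0,∞) → ℝⁿ \ {0}` with `γ' t = ∇f(γ t)` for all `t ≥ 0`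
and `γ t → 0` as `t → ∞`. -/
def IsGradientTrajectoryToOrigin {n : ℕ} (f : EuclideanSpace ℝ (Fin n) → ℝ)
    (γ : ℝ → EuclideanSpace ℝ (Fin n)) : Prop :=
  (∀ t ∈ Ici (0 : ℝ), γ t ≠ 0) ∧
  (∀ t ∈ Ici (0 : ℝ), HasDerivWithinAt γ (gradient f (γ t)) (Ici 0) t) ∧
  (∃ s ∈ Ici (0 : ℝ), ∃ t ∈ Ici (0 : ℝ), γ s ≠ γ t) ∧
  Tendsto γ atTop (nhds 0)

/-- The stable set of the origin for the flow `ẋ = ∇f(x)`. -/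
def gradientStableSet {n : ℕ} (f : EuclideanSpace ℝ (Fin n) → ℝ) :
    Set (EuclideanSpace ℝ (Fin n)) :=
  {x₀ | ∃ γ : ℝ → EuclideanSpace ℝ (Fin n), γ 0 = x₀ ∧
    (∀ t ∈ Ici (0 : ℝ), HasDerivWithinAt γ (gradient f (γ t)) (Ici 0) t) ∧
    Tendsto γ atTop (nhds 0)}

/-!
In the coordinates `x ± y` the gradient flow reads `(x ± y)' = (x ± y) (3 (x ± y) ± 2 x y)`, so the
lines `y = ±x` are invariant and no trajectory leaves the cone `|y| < -x`. In this cone, as long as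
`-1 < x`, we have `x' ≥ 3 x ^ 2`: a trajectory starting in the triangle `|y| < -x < 1` remains
there, exists for all times, and satisfies `|y| < -x ≤ 1 / (3 t)`, hence tends to the origin.
Along each such trajectory `x` increases strictly, so its orbit meets the line `x = -1/2` at most
once: distinct starting points on this line give distinct orbits.
-/

open scoped Topology Gradient Manifold

section IntegralCurves

variable {E : Type*} [NormedAddCommGroup E] [NormedSpace ℝ E]

theorem exists_isIntegralCurve_of_contDiff_of_hasCompactSupport [CompleteSpace E] {v : E → E}
    (hv : ContDiff ℝ 1 v) (hsupp : HasCompactSupport v) (p : E) :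
    ∃ γ : ℝ → E, γ 0 = p ∧ IsIntegralCurve γ (fun _ ↦ v) := by
  obtain ⟨K, hK⟩ := hv.lipschitzWith_of_hasCompactSupport hsupp one_ne_zero
  obtain ⟨C, hC⟩ := hsupp.exists_bound_of_continuous hv.continuous
  have exists_on_Ioo (a : ℝ) :
      ∃ γ : ℝ → E, γ 0 = p ∧ IsMIntegralCurveOn (I := 𝓘(ℝ, E)) γ v (Ioo (-a) a) := by
    rcases le_or_gt a 0 with ha | ha
    · refine ⟨fun _ ↦ p, rfl, ?_⟩
      simp only [Ioo_eq_empty_of_le (show a ≤ -a by linarith), IsMIntegralCurveOn,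
        mem_empty_iff_false, false_imp_iff, implies_true]
    · have hPL : IsPicardLindelof (fun _ ↦ v) (tmin := -a) (tmax := a)
          ⟨0, by constructor <;> linarith⟩ p (C.toNNReal * a.toNNReal) 0 C.toNNReal K := by
        refine .of_time_independent (fun x _ ↦ (hC x).trans C.le_coe_toNNReal)
          hK.lipschitzOnWith ?_
        simp [ha.le]
      obtain ⟨γ, hγ0, hγ⟩ := hPL.exists_eq_forall_mem_Icc_hasDerivWithinAt₀
      exact ⟨γ, hγ0, fun t ht ↦ ((hγ t (Ioo_subset_Icc_self ht)).mono
        Ioo_subset_Icc_self).hasFDerivWithinAt.hasMFDerivWithinAt⟩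
  obtain ⟨γ, hγ0, hγ⟩ := (exists_isMIntegralCurve_iff_exists_isMIntegralCurveOn_Ioo
    (contMDiff_vectorSpace_iff_contDiff.2 hv) p).2 exists_on_Ioo
  exact ⟨γ, hγ0, fun t ↦ hasDerivAt_iff_hasFDerivAt.2 (hγ t).hasFDerivAt⟩

theorem exists_isIntegralCurveOn_Ici_of_norm_le [FiniteDimensional ℝ E] {v : E → E}
    (hv : ContDiff ℝ 1 v) {p : E} {R : ℝ}
    (hR : ∀ γ : ℝ → E, γ 0 = p → ∀ T ≥ 0,
      IsIntegralCurveOn γ (fun _ ↦ v) (Icc 0 T) → ‖γ T‖ ≤ R) :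
    ∃ γ : ℝ → E, γ 0 = p ∧ IsIntegralCurveOn γ (fun _ ↦ v) (Ici 0) := by
  have : CompleteSpace E := FiniteDimensional.complete ℝ E
  have hpR : ‖p‖ ≤ R := hR (fun _ ↦ p) rfl 0 le_rfl fun t _ ↦
    hasDerivWithinAt_iff_hasFDerivWithinAt.2 (.of_subsingleton (subsingleton_Icc_of_ge le_rfl))
  -- Cutting `v` off outside a larger ball makes solutions global, and by `hR` the solution from `p`
  -- never leaves the ball on which `v` is unchanged.
  have hRpos : 0 < R + 1 := by linarith [norm_nonneg p]
  let χ : ContDiffBump (0 : E) := ⟨R + 1, R + 2, hRpos, by linarith⟩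
  obtain ⟨γ, hγ0, hγ⟩ := exists_isIntegralCurve_of_contDiff_of_hasCompactSupport
    (χ.contDiff.smul hv) (χ.hasCompactSupport.smul_right (f' := v)) p
  have uncut {s : Set ℝ} (hs : ∀ t ∈ s, ‖γ t‖ ≤ R + 1) :
      IsIntegralCurveOn γ (fun _ ↦ v) s := fun t ht ↦ by
    have hχ : χ (γ t) = 1 := χ.one_of_mem_closedBall (mem_closedBall_zero_iff.2 (hs t ht))
    simpa only [Pi.smul_apply', hχ, one_smul] using (hγ t).hasDerivWithinAt
  refine ⟨γ, hγ0, uncut fun T hT ↦ ?_⟩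
  have stays_in_ball : Icc 0 T ⊆ {t | ‖γ t‖ ≤ R + 1} := by
    refine IsClosed.Icc_subset_of_forall_mem_nhdsGT_of_Icc_subset
      ((isClosed_le hγ.continuous.norm continuous_const).inter isClosed_Icc)
      (by simpa only [mem_ofPred_eq, hγ0] using by linarith) fun t ht hball ↦ ?_
    have hlt : ‖γ t‖ < R + 1 := by linarith [hR γ hγ0 t ht.1 (uncut hball)]
    exact mem_nhdsWithin_of_mem_nhds
      ((hγ.continuous.norm.continuousAt.eventually_lt_const hlt).mono fun _ ↦ le_of_lt)
  exact stays_in_ball (right_mem_Icc.2 hT)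

end IntegralCurves

section ScalarEquations

theorem pos_of_isIntegralCurveOn_mul {a u : ℝ → ℝ} {t₀ t₁ : ℝ} (ha : ContinuousOn a (Icc t₀ t₁))
    (hu : IsIntegralCurveOn u (fun t x ↦ a t * x) (Icc t₀ t₁)) (hpos : 0 < u t₀) :
    ∀ t ∈ Icc t₀ t₁, 0 < u t := by
  intro t ht
  by_contra! hle
  obtain ⟨s, hs, hzero⟩ := intermediate_value_Icc' ht.1
    (hu.continuousOn.mono (Icc_subset_Icc_right ht.2)) ⟨hle, hpos.le⟩
  have hsub : Icc t₀ s ⊆ Icc t₀ t₁ := Icc_subset_Icc_right (hs.2.trans ht.2)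
  obtain ⟨C, hC⟩ := isCompact_Icc.exists_bound_of_continuousOn (ha.mono hsub)
  -- The zero solution takes the same value at `s`, so backward uniqueness forces `u t₀ = 0`.
  have heq : EqOn u 0 (Icc t₀ s) := by
    refine ODE_solution_unique_of_mem_Icc_left (v := fun t x ↦ a t * x) (s := fun _ ↦ univ)
      (K := C.toNNReal) (fun r hr ↦ ?_) (hu.continuousOn.mono hsub) (fun r hr ↦ ?_)
      (fun _ _ ↦ mem_univ _) continuousOn_const (fun r _ ↦ ?_) (fun _ _ ↦ mem_univ _) hzero
    · refine (LipschitzWith.of_dist_le_mul fun x y ↦ ?_).lipschitzOnWith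
      rw [Real.dist_eq, Real.dist_eq, ← mul_sub, abs_mul]
      gcongr
      exact (hC r (Ioc_subset_Icc_self hr)).trans C.le_coe_toNNReal
    · exact (hu r (hsub (Ioc_subset_Icc_self hr))).mono_of_mem_nhdsWithin
        (mem_of_superset (Icc_mem_nhdsLE hr.1)
          (Icc_subset_Icc_right (hr.2.trans (hs.2.trans ht.2))))
    · simpa only [Pi.zero_apply, mul_zero] using hasDerivWithinAt_zero r (Iic r)
  exact hpos.ne' (heq (left_mem_Icc.2 hs.1))

theorem tendsto_zero_of_mul_sq_le_deriv {u u' : ℝ → ℝ} {c : ℝ} (hc : 0 < c)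
    (hneg : ∀ t ∈ Ici (0 : ℝ), u t < 0)
    (hu : ∀ t ∈ Ici (0 : ℝ), HasDerivWithinAt u (u' t) (Ici 0) t)
    (hu' : ∀ t ∈ Ici (0 : ℝ), c * u t ^ 2 ≤ u' t) : Tendsto u atTop (𝓝 0) := by
  have hderiv : ∀ t ∈ Ici (0 : ℝ),
      HasDerivWithinAt (fun t ↦ -(u t)⁻¹ - c * t) (u' t / u t ^ 2 - c) (Ici 0) t := fun t ht ↦ by
    convert! (((hu t ht).inv (hneg t ht).ne).neg.sub
      ((hasDerivWithinAt_id t (Ici 0)).const_mul c)) using 1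
    ring
  have hmono : MonotoneOn (fun t ↦ -(u t)⁻¹ - c * t) (Ici 0) := by
    refine monotoneOn_of_hasDerivWithinAt_nonneg (convex_Ici 0)
      (fun t ht ↦ (hderiv t ht).continuousWithinAt)
      (fun t ht ↦ (hderiv t (interior_subset ht)).mono interior_subset) fun t ht ↦ ?_
    have ht := interior_subset ht
    rw [sub_nonneg, le_div_iff₀ (sq_pos_of_neg (hneg t ht))]
    exact hu' t ht
  have hgrowth : ∀ t ∈ Ici (0 : ℝ), c * t ≤ -(u t)⁻¹ := fun t ht ↦ by
    have h := hmono self_mem_Ici ht ht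
    have h0 : (u 0)⁻¹ < 0 := inv_lt_zero.2 (hneg 0 self_mem_Ici)
    linarith
  have hinv : Tendsto (fun t ↦ -(u t)⁻¹) atTop atTop :=
    tendsto_atTop_mono' atTop ((eventually_ge_atTop 0).mono hgrowth)
      (tendsto_id.const_mul_atTop hc)
  simpa only [Pi.inv_def, inv_neg, inv_inv, neg_neg, neg_zero] using hinv.inv_tendsto_atTop.neg

end ScalarEquations

theorem contDiff_gradient {F : Type*} [NormedAddCommGroup F] [InnerProductSpace ℝ F]
    [CompleteSpace F] {f : F → ℝ} {m n : WithTop ℕ∞} (hf : ContDiff ℝ n f) (hmn : m + 1 ≤ n) :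
    ContDiff ℝ m (∇ f) :=
  (InnerProductSpace.toDual ℝ F).symm.contDiff.comp (hf.fderiv_right hmn)

theorem hasDerivWithinAt_euclidean_apply {n : ℕ} {γ : ℝ → EuclideanSpace ℝ (Fin n)}
    {γ' : EuclideanSpace ℝ (Fin n)} {s : Set ℝ} {t : ℝ} (h : HasDerivWithinAt γ γ' s t)
    (i : Fin n) : HasDerivWithinAt (fun t ↦ γ t i) (γ' i) s t :=
  (EuclideanSpace.proj (𝕜 := ℝ) i).hasFDerivAt.comp_hasDerivWithinAt t h

section GradientFlow

/-- The polynomial `x³ + 3xy² + x²y²`, whose gradient flow is studied. -/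
def potential (p : EuclideanSpace ℝ (Fin 2)) : ℝ :=
  (p 0) ^ 3 + 3 * p 0 * (p 1) ^ 2 + (p 0) ^ 2 * (p 1) ^ 2

/-- The open triangle cut out by the lines `y = ±x`, which are invariant under the gradient flow of
`potential`, and the line `x = -1`. -/
def triangle : Set (EuclideanSpace ℝ (Fin 2)) :=
  {p | |p 1| < -p 0 ∧ -1 < p 0}

variable {p : EuclideanSpace ℝ (Fin 2)} {γ : ℝ → EuclideanSpace ℝ (Fin 2)}

theorem contDiff_potential : ContDiff ℝ 2 potential := by
  unfold potential
  fun_prop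

theorem gradient_potential (p : EuclideanSpace ℝ (Fin 2)) :
    ∇ potential p =
      !₂[3 * p 0 ^ 2 + 3 * p 1 ^ 2 + 2 * p 0 * p 1 ^ 2, 6 * p 0 * p 1 + 2 * p 0 ^ 2 * p 1] := by
  refine HasGradientAt.gradient (hasGradientAt_iff_hasFDerivAt.2 ?_)
  have hx := (EuclideanSpace.proj (𝕜 := ℝ) (0 : Fin 2)).hasFDerivAt (x := p)
  have hy := (EuclideanSpace.proj (𝕜 := ℝ) (1 : Fin 2)).hasFDerivAt (x := p)
  refine (((hx.pow 3).add ((hx.const_mul 3).mul (hy.pow 2))).add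
    ((hx.pow 2).mul (hy.pow 2))).congr_fderiv ?_
  ext q
  simp only [Nat.add_one_sub_one, nsmul_eq_mul, Nat.cast_ofNat, pow_one, add_apply, smul_apply,
    smul_eq_mul, PiLp.proj_apply, InnerProductSpace.toDual_apply_apply, PiLp.inner_apply,
    RCLike.inner_apply, Real.ringHom_apply, Fin.sum_univ_two, Matrix.cons_val_zero,
    Matrix.cons_val_one, Matrix.cons_val_fin_one]
  ring

theorem gradient_potential_fst (p : EuclideanSpace ℝ (Fin 2)) :
    ∇ potential p 0 = 3 * p 0 ^ 2 + 3 * p 1 ^ 2 + 2 * p 0 * p 1 ^ 2 :=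
  congrArg (· 0) (gradient_potential p)

theorem gradient_potential_snd (p : EuclideanSpace ℝ (Fin 2)) :
    ∇ potential p 1 = 6 * p 0 * p 1 + 2 * p 0 ^ 2 * p 1 :=
  congrArg (· 1) (gradient_potential p)

theorem isOpen_triangle : IsOpen triangle := by
  have hcone : IsOpen {p : EuclideanSpace ℝ (Fin 2) | |p 1| < -p 0} :=
    isOpen_lt (by fun_prop) (by fun_prop)
  have hstrip : IsOpen {p : EuclideanSpace ℝ (Fin 2) | -1 < p 0} :=
    isOpen_lt (by fun_prop) (by fun_prop)
  exact hcone.inter hstrip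

theorem fst_neg_of_mem_triangle (hp : p ∈ triangle) : p 0 < 0 :=
  neg_pos.1 ((abs_nonneg _).trans_lt hp.1)

theorem norm_le_of_mem_triangle (hp : p ∈ triangle) : ‖p‖ ≤ 2 * -p 0 := by
  have hx := fst_neg_of_mem_triangle hp
  rw [EuclideanSpace.norm_eq, Fin.sum_univ_two]
  refine Real.sqrt_le_iff.2 ⟨by linarith, ?_⟩
  have hy : ‖p 1‖ ^ 2 ≤ (-p 0) ^ 2 := by
    gcongr
    exact hp.1.le
  rw [Real.norm_eq_abs, sq_abs]
  nlinarith

theorem le_gradient_potential_fst_of_mem_triangle (hp : p ∈ triangle) :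
    3 * p 0 ^ 2 ≤ ∇ potential p 0 := by
  have hy : 0 ≤ p 1 ^ 2 * (3 + 2 * p 0) := mul_nonneg (sq_nonneg _) (by linarith [hp.2])
  rw [gradient_potential_fst]
  linarith

theorem gradient_potential_fst_pos_of_mem_triangle (hp : p ∈ triangle) : 0 < ∇ potential p 0 := by
  have hx : 0 < p 0 ^ 2 := sq_pos_of_neg (fst_neg_of_mem_triangle hp)
  linarith [le_gradient_potential_fst_of_mem_triangle hp]

theorem abs_snd_lt_neg_fst_of_isIntegralCurveOn {T : ℝ}
    (hγ : IsIntegralCurveOn γ (fun _ ↦ ∇ potential) (Icc 0 T)) (h0 : |γ 0 1| < -γ 0 0) :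
    ∀ t ∈ Icc 0 T, |γ t 1| < -γ t 0 := by
  have hx t (ht : t ∈ Icc 0 T) := hasDerivWithinAt_euclidean_apply (hγ t ht) 0
  have hy t (ht : t ∈ Icc 0 T) := hasDerivWithinAt_euclidean_apply (hγ t ht) 1
  have hγc := hγ.continuousOn
  have sum_pos : ∀ t ∈ Icc 0 T, 0 < -(γ t 0 + γ t 1) := by
    refine pos_of_isIntegralCurveOn_mul (a := fun t ↦ 3 * (γ t 0 + γ t 1) + 2 * γ t 0 * γ t 1)
      (by fun_prop) (fun t ht ↦ ((hx t ht).add (hy t ht)).neg.congr_deriv ?_)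
      (by linarith [neg_lt_of_abs_lt h0, lt_of_abs_lt h0])
    simp only [gradient_potential_fst, gradient_potential_snd]
    ring
  have diff_pos : ∀ t ∈ Icc 0 T, 0 < -(γ t 0 - γ t 1) := by
    refine pos_of_isIntegralCurveOn_mul (a := fun t ↦ 3 * (γ t 0 - γ t 1) - 2 * γ t 0 * γ t 1)
      (by fun_prop) (fun t ht ↦ ((hx t ht).sub (hy t ht)).neg.congr_deriv ?_)
      (by linarith [neg_lt_of_abs_lt h0, lt_of_abs_lt h0])
    simp only [gradient_potential_fst, gradient_potential_snd]
    ring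
  exact fun t ht ↦ abs_lt.2 ⟨by linarith [diff_pos t ht, sum_pos t ht],
    by linarith [diff_pos t ht, sum_pos t ht]⟩

theorem mem_triangle_of_isIntegralCurveOn {T : ℝ}
    (hγ : IsIntegralCurveOn γ (fun _ ↦ ∇ potential) (Icc 0 T)) (h0 : γ 0 ∈ triangle) :
    ∀ t ∈ Icc 0 T, γ t ∈ triangle := by
  have hcone := abs_snd_lt_neg_fst_of_isIntegralCurveOn hγ h0.1
  have hγc := hγ.continuousOn
  suffices ∀ ⦃t⦄, t ∈ Icc 0 T → -γ t 0 ≤ -γ 0 0 from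
    fun t ht ↦ ⟨hcone t ht, by linarith [this ht, h0.2]⟩
  refine image_le_of_deriv_right_lt_deriv_boundary (f' := fun t ↦ -∇ potential (γ t) 0)
    (B' := fun _ ↦ 0) (by fun_prop) (fun t ht ↦ ?_) le_rfl (fun t ↦ hasDerivAt_const t _)
    fun t ht hcontact ↦ ?_
  · exact (hasDerivWithinAt_euclidean_apply (hγ t (Ico_subset_Icc_self ht)) 0).neg
      |>.mono_of_mem_nhdsWithin (Icc_mem_nhdsGE_of_mem ht)
  · have hmem : γ t ∈ triangle := ⟨hcone t (Ico_subset_Icc_self ht), by linarith [h0.2]⟩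
    exact neg_neg_iff_pos.2 (gradient_potential_fst_pos_of_mem_triangle hmem)

theorem exists_isIntegralCurveOn_Ici_of_mem_triangle (hp : p ∈ triangle) :
    ∃ γ : ℝ → EuclideanSpace ℝ (Fin 2), γ 0 = p ∧
      IsIntegralCurveOn γ (fun _ ↦ ∇ potential) (Ici 0) ∧ ∀ t ∈ Ici (0 : ℝ), γ t ∈ triangle := by
  obtain ⟨γ, hγ0, hγ⟩ := exists_isIntegralCurveOn_Ici_of_norm_le (p := p) (R := 2)
    (contDiff_gradient contDiff_potential (by norm_num)) fun γ hγ0 T hT hγ ↦ by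
      have hmem := mem_triangle_of_isIntegralCurveOn hγ (hγ0 ▸ hp) T (right_mem_Icc.2 hT)
      linarith [norm_le_of_mem_triangle hmem, hmem.2]
  exact ⟨γ, hγ0, hγ, fun t ht ↦ mem_triangle_of_isIntegralCurveOn
    (hγ.mono Icc_subset_Ici_self) (hγ0 ▸ hp) t (right_mem_Icc.2 ht)⟩

theorem strictMonoOn_fst_of_mem_triangle (hγ : IsIntegralCurveOn γ (fun _ ↦ ∇ potential) (Ici 0))
    (hmem : ∀ t ∈ Ici (0 : ℝ), γ t ∈ triangle) : StrictMonoOn (fun t ↦ γ t 0) (Ici 0) := by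
  have hx t (ht : t ∈ Ici (0 : ℝ)) := hasDerivWithinAt_euclidean_apply (hγ t ht) 0
  exact strictMonoOn_of_hasDerivWithinAt_pos (convex_Ici 0)
    (fun t ht ↦ (hx t ht).continuousWithinAt)
    (fun t ht ↦ (hx t (interior_subset ht)).mono interior_subset)
    fun t ht ↦ gradient_potential_fst_pos_of_mem_triangle (hmem t (interior_subset ht))

theorem tendsto_zero_of_mem_triangle (hγ : IsIntegralCurveOn γ (fun _ ↦ ∇ potential) (Ici 0))
    (hmem : ∀ t ∈ Ici (0 : ℝ), γ t ∈ triangle) : Tendsto γ atTop (𝓝 0) := by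
  have hx : Tendsto (fun t ↦ γ t 0) atTop (𝓝 0) :=
    tendsto_zero_of_mul_sq_le_deriv three_pos (fun t ht ↦ fst_neg_of_mem_triangle (hmem t ht))
      (fun t ht ↦ hasDerivWithinAt_euclidean_apply (hγ t ht) 0)
      fun t ht ↦ le_gradient_potential_fst_of_mem_triangle (hmem t ht)
  refine squeeze_zero_norm'
    ((eventually_ge_atTop 0).mono fun t ht ↦ norm_le_of_mem_triangle (hmem t ht)) ?_
  simpa only [neg_zero, mul_zero] using hx.neg.const_mul 2

theorem exists_isGradientTrajectoryToOrigin_of_mem_triangle (hp : p ∈ triangle) :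
    ∃ γ, γ 0 = p ∧ IsGradientTrajectoryToOrigin potential γ ∧
      StrictMonoOn (fun t ↦ γ t 0) (Ici 0) := by
  obtain ⟨γ, hγ0, hγ, hmem⟩ := exists_isIntegralCurveOn_Ici_of_mem_triangle hp
  have hmono := strictMonoOn_fst_of_mem_triangle hγ hmem
  have hne : ∀ t ∈ Ici (0 : ℝ), γ t ≠ 0 := fun t ht h ↦
    (fst_neg_of_mem_triangle (hmem t ht)).ne (by simp only [h, PiLp.zero_apply])
  have hnonconst : γ 0 ≠ γ 1 := fun h ↦
    (hmono self_mem_Ici (mem_Ici.2 zero_le_one) zero_lt_one).ne (congrArg (· 0) h)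
  exact ⟨γ, hγ0, ⟨hne, hγ, ⟨0, self_mem_Ici, 1, mem_Ici.2 zero_le_one, hnonconst⟩,
    tendsto_zero_of_mem_triangle hγ hmem⟩, hmono⟩

theorem triangle_subset_gradientStableSet : triangle ⊆ gradientStableSet potential := fun _ hp ↦ by
  obtain ⟨γ, hγ0, ⟨-, hγ, -, hlim⟩, -⟩ := exists_isGradientTrajectoryToOrigin_of_mem_triangle hp
  exact ⟨γ, hγ0, hγ, hlim⟩

theorem mem_triangle_of_mem_Ioo {s : ℝ} (hs : s ∈ Ioo (-2⁻¹ : ℝ) 2⁻¹) : !₂[-2⁻¹, s] ∈ triangle := by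
  have hs' : |s| < 2⁻¹ := abs_lt.2 hs
  constructor
  · simpa using hs'
  · norm_num

theorem infinite_trajectories_potential :
    {S | ∃ γ, IsGradientTrajectoryToOrigin potential γ ∧ S = γ '' Ici 0}.Infinite := by
  choose! γ hγ0 hγ hmono using fun s hs ↦
    exists_isGradientTrajectoryToOrigin_of_mem_triangle (mem_triangle_of_mem_Ioo (s := s) hs)
  refine infinite_of_injOn_mapsTo (f := fun s ↦ γ s '' Ici 0) (fun s hs r hr hsr ↦ ?_)
    (fun s hs ↦ ⟨γ s, hγ s hs, rfl⟩) (Ioo_infinite (show (-2⁻¹ : ℝ) < 2⁻¹ by norm_num))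
  obtain ⟨t, ht, hts⟩ : γ s 0 ∈ γ r '' Ici 0 :=
    hsr.subset (mem_image_of_mem (γ s) self_mem_Ici)
  have hfst : γ r t 0 = γ r 0 0 := by simp [hts, hγ0 s hs, hγ0 r hr]
  obtain rfl := (hmono r hr).injOn ht self_mem_Ici hfst
  simpa [hγ0 s hs, hγ0 r hr] using (congrArg (· 1) hts).symm

end GradientFlow

/-- **Example after Proposition `plik_7_3`.** For
`f(x,y) = x³ + 3xy² + x²y²` the stable set of the origin for the gradient flow
`ẋ = ∇f(x)` has nonempty interior; in particular there are infinitely many nontrivial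
trajectories of this flow converging to the origin. -/
theorem statement10 :
    (interior (gradientStableSet
      (fun p : EuclideanSpace ℝ (Fin 2) =>
        (p 0) ^ 3 + 3 * p 0 * (p 1) ^ 2 + (p 0) ^ 2 * (p 1) ^ 2))).Nonempty ∧
    {S : Set (EuclideanSpace ℝ (Fin 2)) |
      ∃ γ : ℝ → EuclideanSpace ℝ (Fin 2),
        IsGradientTrajectoryToOrigin
          (fun p => (p 0) ^ 3 + 3 * p 0 * (p 1) ^ 2 + (p 0) ^ 2 * (p 1) ^ 2) γ ∧
        S = γ '' Ici 0}.Infinite := by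
  refine ⟨?_, infinite_trajectories_potential⟩
  have hsub := interior_maximal triangle_subset_gradientStableSet isOpen_triangle
  exact ⟨_, hsub (mem_triangle_of_mem_Ioo (s := 0) (by norm_num))⟩
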